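/- Let P be a set of at least 9 points in a plane H ⊂ ℙ³ which lies in the intersection of two cubic surfaces in ℙ³ meeting H in two distinct cubic curves. Then P satisfies the Cayley–Bacharach property for O(3) in ℙ³: every cubic form on ℙ³ vanishing on all but one point of P vanishes on all of P. -/

import Mathlib

open MvPolynomial

/-!
On the plane `H` the two cubics cut curves `F` and `G` without common component. By counting
dimensions, a curve of degree `k ≤ 3` through too many points of `F ∩ G` that impose independent
conditions on cubics is a component of both `F` and `G`: four such points rule out a line, seven a
conic, and nine a cubic. Ruling out lines and conics and multiplying forms of small degree produces,
for any seven points of `F ∩ G` and an eighth one, a cubic through the seven that avoids the eighth,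
so any eight points impose independent conditions on cubics. If a cubic contained eight points of
`P` but not a ninth, then all nine would impose independent conditions, and no cubic through nine
such points of `F ∩ G` exists, whereas `F` is one.
-/

namespace CayleyBacharach

open Module
open scoped LinearAlgebra.Projectivization

section Subspace

variable {K V W : Type*} [DivisionRing K] [AddCommGroup V] [Module K V] [AddCommGroup W]
  [Module K W]

lemma exists_injective_range_eq {n : ℕ} (U : Submodule K V) [FiniteDimensional K U]
    (hU : finrank K U = n) :
    ∃ φ : (Fin n → K) →ₗ[K] V, Function.Injective φ ∧ LinearMap.range φ = U := by
  let equiv : (Fin n → K) ≃ₗ[K] U := .ofFinrankEq _ _ (by rw [finrank_fin_fun, hU])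
  refine ⟨U.subtype ∘ₗ equiv.toLinearMap, U.subtype_injective.comp equiv.injective, ?_⟩
  rw [LinearMap.range_comp, LinearEquiv.range, Submodule.map_top, Submodule.range_subtype]

lemma mem_range_map_iff_rep_mem {φ : V →ₗ[K] W} (hφ : Function.Injective φ) {p : ℙ K W} :
    p ∈ Set.range (Projectivization.map φ hφ) ↔ p.rep ∈ LinearMap.range φ := by
  constructor
  · rintro ⟨q, rfl⟩
    rw [← q.mk_rep, Projectivization.map_mk]
    obtain ⟨a, ha⟩ := Projectivization.exists_smul_eq_mk_rep K (φ q.rep)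
      (map_zero φ ▸ hφ.ne q.rep_nonzero)
    exact ha ▸ Submodule.smul_of_tower_mem _ a ⟨_, rfl⟩
  · rintro ⟨x, hx⟩
    have hx0 : x ≠ 0 := by
      rintro rfl
      exact p.rep_nonzero (by rw [← hx, map_zero])
    refine ⟨.mk K x hx0, ?_⟩
    simp only [Projectivization.map_mk, hx, Projectivization.mk_rep]

end Subspace

section Evaluation

lemma eval_smul_of_isHomogeneous {R σ : Type*} [CommSemiring R] {n : ℕ} {A : MvPolynomial σ R}
    (hA : A.IsHomogeneous n) (c : R) (x : σ → R) : eval (c • x) A = c ^ n * eval x A := by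
  rw [eval_eq, eval_eq, Finset.mul_sum]
  refine Finset.sum_congr rfl fun m hm ↦ ?_
  simp only [Pi.smul_apply, smul_eq_mul, mul_pow, Finset.prod_mul_distrib,
    Finset.prod_pow_eq_pow_sum, hA.degree_eq_sum_deg_support hm]
  ring

variable {K σ : Type*} [Field K]

lemma eval_rep_mk_eq_zero_iff {n : ℕ} {A : MvPolynomial σ K} (hA : A.IsHomogeneous n)
    {x : σ → K} (hx : x ≠ 0) :
    eval (Projectivization.mk K x hx).rep A = 0 ↔ eval x A = 0 := by
  obtain ⟨a, ha⟩ := Projectivization.exists_smul_eq_mk_rep K x hx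
  rw [← ha, Units.smul_def, eval_smul_of_isHomogeneous hA]
  simp only [mul_eq_zero, pow_eq_zero_iff', a.ne_zero, false_and, false_or]

/-- The common zeros in projective space of two forms `F` and `G`. -/
def commonZeros (F G : MvPolynomial σ K) : Set (ℙ K (σ → K)) :=
  {p | eval p.rep F = 0 ∧ eval p.rep G = 0}

variable {ι : Type*} [Fintype ι] [DecidableEq ι]

/-- The pullback `F ∘ φ` of a polynomial `F` along a linear map `φ`. -/
noncomputable def pullback (φ : (ι → K) →ₗ[K] (σ → K)) (F : MvPolynomial σ K) :
    MvPolynomial ι K :=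
  aeval (LinearMap.toMatrix' φ).toMvPolynomial F

lemma isHomogeneous_pullback (φ : (ι → K) →ₗ[K] (σ → K)) {F : MvPolynomial σ K} {d : ℕ}
    (hF : F.IsHomogeneous d) : (pullback φ F).IsHomogeneous d := by
  simpa only [pullback, one_mul] using hF.aeval _ (Matrix.toMvPolynomial_isHomogeneous _)

lemma eval_pullback (φ : (ι → K) →ₗ[K] (σ → K)) (F : MvPolynomial σ K) (x : ι → K) :
    eval x (pullback φ F) = eval (φ x) F := by
  simp only [pullback, aeval_eq_bind₁, ← coe_aeval_eq_eval, RingHom.coe_coe, aeval_bind₁]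
  congr! 2
  ext i
  rw [aeval_eq_eval, Matrix.toMvPolynomial_eval_eq_apply, LinearMap.toMatrix'_mulVec]

lemma eval_map_rep_eq_zero_iff {φ : (ι → K) →ₗ[K] (σ → K)} (hφ : Function.Injective φ) {d : ℕ}
    {F : MvPolynomial σ K} (hF : F.IsHomogeneous d) (p : ℙ K (ι → K)) :
    eval (Projectivization.map φ hφ p).rep F = 0 ↔ eval p.rep (pullback φ F) = 0 := by
  rw [eval_pullback]
  conv_lhs => rw [← p.mk_rep, Projectivization.map_mk]
  exact eval_rep_mk_eq_zero_iff hF _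

lemma map_mem_commonZeros_iff {φ : (ι → K) →ₗ[K] (σ → K)} (hφ : Function.Injective φ) {d e : ℕ}
    {F G : MvPolynomial σ K} (hF : F.IsHomogeneous d) (hG : G.IsHomogeneous e)
    {p : ℙ K (ι → K)} : Projectivization.map φ hφ p ∈ commonZeros F G ↔
      p ∈ commonZeros (pullback φ F) (pullback φ G) :=
  and_congr (eval_map_rep_eq_zero_iff hφ hF p) (eval_map_rep_eq_zero_iff hφ hG p)

end Evaluation

section Dimension

variable (K σ : Type*) [Field K]

instance [Finite σ] (d : ℕ) : FiniteDimensional K (homogeneousSubmodule σ K d) :=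
  Module.Finite.iff_fg.2 (homogeneousSubmodule_fg σ K d)

lemma finrank_homogeneousSubmodule [Fintype σ] (d : ℕ) :
    finrank K (homogeneousSubmodule σ K d) = (Fintype.card σ).multichoose d := by
  classical
  have hmonomials : {m : σ →₀ ℕ | m.degree = d} =
      ↑(Finset.finsuppAntidiag (Finset.univ : Finset σ) d) := by
    ext m
    simp [Finset.mem_finsuppAntidiag, Finsupp.degree_eq_sum]
  rw [homogeneousSubmodule_eq_finsupp_supported,
    (AddMonoidAlgebra.supportedEquivFinsupp _).finrank_eq, hmonomials, finrank_finsupp_self]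
  simp [Finset.card_finsuppAntidiag_nat_eq_multichoose]

end Dimension

section Separation

variable {K σ : Type*} [Field K]

/-- The forms of degree `d` separate the point `p` from the set `T`: some hypersurface of degree
`d` contains `T` but not `p`. -/
def IsSeparated (d : ℕ) (p : ℙ K (σ → K)) (T : Set (ℙ K (σ → K))) : Prop :=
  ∃ A : MvPolynomial σ K, A.IsHomogeneous d ∧ eval p.rep A ≠ 0 ∧ ∀ q ∈ T, eval q.rep A = 0

variable {d e m : ℕ} {p q : ℙ K (σ → K)} {S T Z : Set (ℙ K (σ → K))}

lemma IsSeparated.mono (hT : IsSeparated d p T) (hST : S ⊆ T) : IsSeparated d p S := by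
  obtain ⟨A, hA, hAp, hAT⟩ := hT
  exact ⟨A, hA, hAp, fun q hq ↦ hAT q (hST hq)⟩

lemma IsSeparated.mul (hS : IsSeparated d p S) (hT : IsSeparated e p T) :
    IsSeparated (d + e) p (S ∪ T) := by
  obtain ⟨A, hA, hAp, hAS⟩ := hS
  obtain ⟨B, hB, hBp, hBT⟩ := hT
  refine ⟨A * B, hA.mul hB, by rw [map_mul]; exact mul_ne_zero hAp hBp, ?_⟩
  rintro q (hq | hq)
  · rw [map_mul, hAS q hq, zero_mul]
  · rw [map_mul, hBT q hq, mul_zero]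

-- `T ↦ {p | p is not separated from T}` is the closure operator of a linear matroid.
lemma IsSeparated.exchange (hp : IsSeparated d p T) (hq : IsSeparated d q (insert p T)) :
    IsSeparated d p (insert q T) := by
  obtain ⟨A, hA, hAp, hAT⟩ := hp
  obtain ⟨B, hB, hBq, hBT⟩ := hq
  have hBp : eval p.rep B = 0 := hBT p (Set.mem_insert p T)
  refine ⟨A - C (eval q.rep A / eval q.rep B) * B, hA.sub (hB.C_mul _), ?_, ?_⟩
  · simpa only [map_sub, map_mul, eval_C, hBp, mul_zero, sub_zero] using hAp
  · rintro r (rfl | hr)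
    · simp only [map_sub, map_mul, eval_C, div_mul_cancel₀ _ hBq, sub_self]
    · simp only [map_sub, map_mul, hAT r hr, hBT r (Set.mem_insert_of_mem p hr), mul_zero,
        sub_zero]

lemma isSeparated_singleton (hpq : p ≠ q) : IsSeparated 1 p {q} := by
  obtain ⟨i, j, hij⟩ : ∃ i j, q.rep j * p.rep i - q.rep i * p.rep j ≠ 0 := by
    by_contra! hminors
    obtain ⟨j, hj⟩ := Function.ne_iff.1 q.rep_nonzero
    have hindep := Projectivization.linearIndependent_pair_iff_ne.2 hpq.symm
    refine (LinearIndependent.pair_iff' q.rep_nonzero).1 hindep (p.rep j / q.rep j) ?_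
    ext i
    simp only [Pi.smul_apply, smul_eq_mul]
    rw [div_mul_eq_mul_div, div_eq_iff hj]
    linear_combination -hminors i j
  refine ⟨C (q.rep j) * X i - C (q.rep i) * X j,
    (isHomogeneous_C_mul_X _ _).sub (isHomogeneous_C_mul_X _ _), by simpa using hij, ?_⟩
  rintro _ rfl
  simp only [map_sub, map_mul, eval_C, eval_X]
  ring

lemma isSeparated_ncard (hT : T.Finite) (hp : p ∉ T) : IsSeparated T.ncard p T := by
  induction T, hT using Set.Finite.induction_on with
  | empty => exact ⟨1, by simpa using isHomogeneous_one σ K, by simp, by simp⟩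
  | @insert q T hq hT ih =>
    rw [Set.mem_insert_iff, not_or] at hp
    rw [Set.ncard_insert_of_notMem hq hT, ← Set.union_singleton]
    exact (ih hp.2).mul (isSeparated_singleton hp.1)

/-- The points of `T` impose independent conditions on forms of degree `d`. -/
def ImposesIndependentConditions (d : ℕ) (T : Set (ℙ K (σ → K))) : Prop :=
  ∀ p ∈ T, IsSeparated d p (T \ {p})

lemma ImposesIndependentConditions.insert (hT : ImposesIndependentConditions d T)
    (hp : IsSeparated d p T) : ImposesIndependentConditions d (insert p T) := by
  intro q hq
  by_cases hqp : q = p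
  · subst hqp
    exact hp.mono (by simp)
  · have hqT : q ∈ T := hq.resolve_left hqp
    rw [← Set.insert_sdiff_singleton_comm (Ne.symm hqp)]
    exact (hT q hqT).exchange (by rwa [Set.insert_sdiff_singleton, Set.insert_eq_of_mem hqT])

/-- Evaluation of forms of degree `d` at representatives of the points of `T`. -/
noncomputable def evalAt (d : ℕ) (T : Set (ℙ K (σ → K))) :
    homogeneousSubmodule σ K d →ₗ[K] (T → K) :=
  LinearMap.pi fun p ↦ (aeval p.1.rep).toLinearMap ∘ₗ (homogeneousSubmodule σ K d).subtype

lemma evalAt_apply (A : homogeneousSubmodule σ K d) (p : T) :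
    evalAt d T A p = eval p.1.rep A.1 := by
  simp [evalAt, aeval_eq_eval]

lemma mem_ker_evalAt {A : homogeneousSubmodule σ K d} :
    A ∈ LinearMap.ker (evalAt d T) ↔ ∀ p ∈ T, eval p.rep A.1 = 0 := by
  simp only [LinearMap.mem_ker, funext_iff, evalAt_apply, Pi.zero_apply, Subtype.forall]

lemma ImposesIndependentConditions.surjective_evalAt (hfin : T.Finite)
    (hT : ImposesIndependentConditions d T) : Function.Surjective (evalAt d T) := by
  classical
  have := hfin.fintype
  rw [← LinearMap.range_eq_top, ← top_le_iff, ← (Pi.basisFun K T).span_eq, Submodule.span_le]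
  rintro _ ⟨p, rfl⟩
  obtain ⟨A, hA, hAp, hAT⟩ := hT p p.2
  refine ⟨(eval p.1.rep A)⁻¹ • ⟨A, hA⟩, ?_⟩
  ext q
  rw [map_smul, Pi.smul_apply, evalAt_apply, Pi.basisFun_apply]
  by_cases hqp : q = p
  · subst hqp
    simp [hAp]
  · simp [hqp, hAT q ⟨q.2, by simpa [Subtype.ext_iff] using hqp⟩]

variable [Finite σ]

lemma ImposesIndependentConditions.finrank_ker_add_ncard (hfin : T.Finite)
    (hT : ImposesIndependentConditions d T) :
    finrank K (LinearMap.ker (evalAt d T)) + T.ncard = finrank K (homogeneousSubmodule σ K d) := by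
  have := hfin.fintype
  have hrange : finrank K (LinearMap.range (evalAt d T)) = T.ncard := by
    rw [LinearMap.range_eq_top.2 (hT.surjective_evalAt hfin), finrank_top,
      finrank_fintype_fun_eq_card, Fintype.card_eq_nat_card, Nat.card_coe_set_eq]
  rw [← LinearMap.finrank_range_add_finrank_ker (evalAt d T), hrange, add_comm]

lemma exists_form_ne_zero_of_ncard_lt (hfin : T.Finite)
    (hT : T.ncard < finrank K (homogeneousSubmodule σ K d)) :
    ∃ A : MvPolynomial σ K, A.IsHomogeneous d ∧ A ≠ 0 ∧ ∀ p ∈ T, eval p.rep A = 0 := by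
  have := hfin.fintype
  have hker : LinearMap.ker (evalAt d T) ≠ ⊥ := LinearMap.ker_ne_bot_of_finrank_lt (by
    rwa [finrank_fintype_fun_eq_card, Fintype.card_eq_nat_card, Nat.card_coe_set_eq])
  obtain ⟨A, hA, hA0⟩ := Submodule.exists_mem_ne_zero_of_ne_bot hker
  exact ⟨A, A.2, by simpa using hA0, mem_ker_evalAt.1 hA⟩

/-- Multiplication by a form of degree `k`. -/
noncomputable def mulForm {k : ℕ} (A : homogeneousSubmodule σ K k) (e : ℕ) :
    homogeneousSubmodule σ K e →ₗ[K] homogeneousSubmodule σ K (k + e) :=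
  (LinearMap.mulLeft K A.1 ∘ₗ (homogeneousSubmodule σ K e).subtype).codRestrict _
    fun B ↦ A.2.mul B.2

-- The multiples of `A` already exhaust the forms vanishing on `T`, by comparing dimensions.
lemma ImposesIndependentConditions.dvd {k : ℕ} (hfin : T.Finite)
    (hT : ImposesIndependentConditions (k + e) T)
    (hcard : T.ncard + finrank K (homogeneousSubmodule σ K e) =
      finrank K (homogeneousSubmodule σ K (k + e)))
    {A F : MvPolynomial σ K} (hA : A.IsHomogeneous k) (hA0 : A ≠ 0)
    (hAT : ∀ p ∈ T, eval p.rep A = 0) (hF : F.IsHomogeneous (k + e))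
    (hFT : ∀ p ∈ T, eval p.rep F = 0) : A ∣ F := by
  let mulA := mulForm ⟨A, hA⟩ e
  have hinj : Function.Injective mulA := fun B C hBC ↦
    Subtype.ext (mul_left_cancel₀ hA0 (congrArg Subtype.val hBC))
  have hle : LinearMap.range mulA ≤ LinearMap.ker (evalAt (k + e) T) := by
    rintro _ ⟨B, rfl⟩
    refine mem_ker_evalAt.2 fun p hp ↦ ?_
    change eval p.rep (A * B.1) = 0
    rw [map_mul, hAT p hp, zero_mul]
  have hrange : LinearMap.range mulA = LinearMap.ker (evalAt (k + e) T) := by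
    refine Submodule.eq_of_le_of_finrank_eq hle ?_
    have := hT.finrank_ker_add_ncard hfin
    rw [LinearMap.finrank_range_of_inj hinj]
    omega
  obtain ⟨B, hB⟩ : ⟨F, hF⟩ ∈ LinearMap.range mulA := hrange ▸ mem_ker_evalAt.2 hFT
  exact ⟨B, (congrArg Subtype.val hB).symm⟩

end Separation

section CommonZeros

variable {K σ : Type*} [Field K]

/-- The forms of degree `d` separate each point of `Z` from any `m` other points of `Z`. -/
def SeparatesSubsets (d m : ℕ) (Z : Set (ℙ K (σ → K))) : Prop :=
  ∀ p ∈ Z, ∀ T ⊆ Z, T.Finite → T.ncard = m → p ∉ T → IsSeparated d p T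

/-- The hypersurfaces `F = 0` and `G = 0` have no common component. Testing homogeneous divisors
suffices, since divisors of nonzero forms are forms; as `0` is homogeneous of every degree, `F` and
`G` are not both zero. -/
def NoCommonComponent (F G : MvPolynomial σ K) : Prop :=
  ∀ ⦃n : ℕ⦄ ⦃A : MvPolynomial σ K⦄, A.IsHomogeneous n → A ∣ F → A ∣ G → n = 0

variable {d k e m : ℕ} {p b c : ℙ K (σ → K)} {T U Z : Set (ℙ K (σ → K))} {F G : MvPolynomial σ K}

lemma separatesSubsets_self (d : ℕ) (Z : Set (ℙ K (σ → K))) : SeparatesSubsets d d Z :=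
  fun _ _ _ _ hT hTcard hpT ↦ hTcard ▸ isSeparated_ncard hT hpT

lemma SeparatesSubsets.imposesIndependentConditions (hZ : SeparatesSubsets d m Z) (hTZ : T ⊆ Z)
    (hT : T.Finite) (hTcard : T.ncard = m + 1) : ImposesIndependentConditions d T := by
  intro p hp
  refine hZ p (hTZ hp) _ (Set.sdiff_subset.trans hTZ) hT.sdiff ?_ (by simp)
  rw [Set.ncard_sdiff_singleton_of_mem hp, hTcard, Nat.add_sub_cancel]

variable [Finite σ]

lemma NoCommonComponent.eq_zero_of_forall_eval_eq_zero (hFG : NoCommonComponent F G)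
    (hF : F.IsHomogeneous (k + e)) (hG : G.IsHomogeneous (k + e)) (hk : k ≠ 0)
    (hTfin : T.Finite) (hTZ : T ⊆ commonZeros F G) (hT : ImposesIndependentConditions (k + e) T)
    (hTcard : T.ncard + finrank K (homogeneousSubmodule σ K e) =
      finrank K (homogeneousSubmodule σ K (k + e)))
    {A : MvPolynomial σ K} (hA : A.IsHomogeneous k) (hAT : ∀ p ∈ T, eval p.rep A = 0) : A = 0 := by
  by_contra hA0
  exact hk <| hFG hA (hT.dvd hTfin hTcard hA hA0 hAT hF fun p hp ↦ (hTZ hp).1)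
    (hT.dvd hTfin hTcard hA hA0 hAT hG fun p hp ↦ (hTZ hp).2)

-- A form of degree `k` through `p` and `U` would, by exchange, also vanish at `b` and `c`, hence at
-- too many independent points.
lemma NoCommonComponent.isSeparated_insert_or_isSeparated_insert (hFG : NoCommonComponent F G)
    (hF : F.IsHomogeneous (k + e)) (hG : G.IsHomogeneous (k + e)) (hk : k ≠ 0)
    (hZ : SeparatesSubsets (k + e) (m + 2) (commonZeros F G))
    (hm : m + 1 < finrank K (homogeneousSubmodule σ K k))
    (hme : m + 3 + finrank K (homogeneousSubmodule σ K e) =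
      finrank K (homogeneousSubmodule σ K (k + e)))
    (hUfin : U.Finite) (hUcard : U.ncard = m) (hpU : p ∉ U) (hc : c ∉ insert p U)
    (hb : b ∉ insert c (insert p U)) (hsub : insert b (insert c (insert p U)) ⊆ commonZeros F G)
    (hsep : IsSeparated k p U) :
    IsSeparated k p (insert b U) ∨ IsSeparated k p (insert c U) := by
  have hpUfin : (insert p U).Finite := hUfin.insert p
  have hpUcard : (insert p U).ncard = m + 1 := by
    rw [Set.ncard_insert_of_notMem hpU hUfin, hUcard]
  have hcard : (insert b (insert c (insert p U))).ncard = m + 3 := by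
    rw [Set.ncard_insert_of_notMem hb (hpUfin.insert c), Set.ncard_insert_of_notMem hc hpUfin,
      hpUcard]
  obtain ⟨A, hA, hA0, hAU⟩ := exists_form_ne_zero_of_ncard_lt hpUfin (hpUcard ▸ hm)
  have eval_eq_zero {q : ℙ K (σ → K)} (hq : ¬ IsSeparated k p (insert q U)) :
      eval q.rep A = 0 := by
    by_contra hAq
    exact hq (hsep.exchange ⟨A, hA, hAq, hAU⟩)
  by_contra! hbc
  refine hA0 (hFG.eq_zero_of_forall_eval_eq_zero hF hG hk ((hpUfin.insert c).insert b) hsub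
    (hZ.imposesIndependentConditions hsub ((hpUfin.insert c).insert b) hcard) (hcard ▸ hme) hA ?_)
  rintro q (rfl | rfl | hq)
  exacts [eval_eq_zero hbc.1, eval_eq_zero hbc.2, hAU q hq]

end CommonZeros

section PlaneCubics

variable {K : Type*} [Field K] {F G : MvPolynomial (Fin 3) K} {p a b c : ℙ K (Fin 3 → K)}
  {S : Set (ℙ K (Fin 3 → K))}

lemma finrank_homogeneousSubmodule_fin_three (d : ℕ) :
    finrank K (homogeneousSubmodule (Fin 3) K d) = (d + 2).choose 2 := by
  rw [finrank_homogeneousSubmodule, Fintype.card_fin, Nat.multichoose_eq,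
    show 3 + d - 1 = d + 2 by omega, ← Nat.choose_symm_add]

lemma NoCommonComponent.isSeparated_pair_or_isSeparated_pair (hFG : NoCommonComponent F G)
    (hF : F.IsHomogeneous 3) (hG : G.IsHomogeneous 3) (hpa : p ≠ a) (hc : c ∉ ({p, a} : Set _))
    (hb : b ∉ ({c, p, a} : Set _)) (hsub : {b, c, p, a} ⊆ commonZeros F G) :
    IsSeparated 1 p {b, a} ∨ IsSeparated 1 p {c, a} :=
  hFG.isSeparated_insert_or_isSeparated_insert (k := 1) (e := 2) (m := 1) hF hG one_ne_zero
    (separatesSubsets_self 3 _) (by simp [finrank_homogeneousSubmodule_fin_three, Nat.choose])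
    (by simp [finrank_homogeneousSubmodule_fin_three, Nat.choose]) (Set.finite_singleton a)
    (Set.ncard_singleton a) hpa hc hb hsub (isSeparated_singleton hpa)

lemma NoCommonComponent.exists_two_isSeparated_pair (hFG : NoCommonComponent F G)
    (hF : F.IsHomogeneous 3) (hG : G.IsHomogeneous 3) (hS : 2 < S.ncard)
    (ha : a ∉ S) (hp : p ∉ insert a S) (hpZ : p ∈ commonZeros F G)
    (haS : insert a S ⊆ commonZeros F G) :
    ∃ b ∈ S, ∃ c ∈ S, b ≠ c ∧ IsSeparated 1 p {b, a} ∧ IsSeparated 1 p {c, a} := by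
  obtain ⟨x, y, z, hx, hy, hz, hxy, hxz, hyz⟩ :=
    (Set.two_lt_ncard_iff (Set.finite_of_ncard_ne_zero (by omega))).1 hS
  rw [Set.mem_insert_iff, not_or] at hp
  have dichotomy {b c : ℙ K (Fin 3 → K)} (hb : b ∈ S) (hc : c ∈ S) (hbc : b ≠ c) :
      IsSeparated 1 p {b, a} ∨ IsSeparated 1 p {c, a} := by
    refine hFG.isSeparated_pair_or_isSeparated_pair hF hG hp.1 ?_ ?_ ?_
    all_goals grind
  grind

lemma NoCommonComponent.separatesSubsets_succ (hFG : NoCommonComponent F G)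
    (hF : F.IsHomogeneous 3) (hG : G.IsHomogeneous 3) {k e m : ℕ} (hke : k + e = 3) (hk : k ≠ 0)
    (hm0 : m ≠ 0) (hm : m + 1 < finrank K (homogeneousSubmodule (Fin 3) K k))
    (hme : m + 3 + finrank K (homogeneousSubmodule (Fin 3) K e) =
      finrank K (homogeneousSubmodule (Fin 3) K (k + e)))
    (hZ : SeparatesSubsets k m (commonZeros F G))
    (hZ3 : SeparatesSubsets (k + e) (m + 2) (commonZeros F G)) :
    SeparatesSubsets (k + 1) (m + 3) (commonZeros F G) := by
  intro p hpZ T hTZ hTfin hTcard hpT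
  obtain ⟨a, S, haS, rfl, hScard⟩ := (Set.ncard_eq_succ hTfin).1 hTcard
  have hSfin : S.Finite := hTfin.subset (Set.subset_insert a S)
  obtain ⟨b, hb, c, hc, hbc, hpb, hpc⟩ :=
    hFG.exists_two_isSeparated_pair hF hG (by omega) haS hpT hpZ hTZ
  let U := S \ {b, c}
  have hUfin : U.Finite := hSfin.sdiff
  have hUcard : U.ncard = m := by
    rw [Set.ncard_sdiff (Set.pair_subset hb hc), Set.ncard_pair hbc, hScard, Nat.add_sub_cancel]
  have hUZ : U ⊆ commonZeros F G := fun q hq ↦ hTZ (Or.inr hq.1)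
  have hpU : p ∉ U := fun hp ↦ hpT (Or.inr hp.1)
  -- Two of the points `a`, `b`, `c` lie on a line avoiding `p`, and `U` and the third one lie on a
  -- curve of degree `k` avoiding `p`.
  rcases hFG.isSeparated_insert_or_isSeparated_insert (hke.symm ▸ hF) (hke.symm ▸ hG) hk hZ3 hm
    hme hUfin hUcard hpU (c := c) (b := b) (by grind) (by grind) (by grind)
    (hZ p hpZ U hUZ hUfin hUcard hpU) with hbU | hcU
  · exact (hbU.mul hpc).mono (by grind)
  · exact (hcU.mul hpb).mono (by grind)

lemma NoCommonComponent.conics_separatesSubsets_four (hFG : NoCommonComponent F G)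
    (hF : F.IsHomogeneous 3) (hG : G.IsHomogeneous 3) :
    SeparatesSubsets 2 4 (commonZeros F G) :=
  hFG.separatesSubsets_succ hF hG (k := 1) (e := 2) (m := 1) rfl one_ne_zero one_ne_zero
    (by simp [finrank_homogeneousSubmodule_fin_three, Nat.choose])
    (by simp [finrank_homogeneousSubmodule_fin_three, Nat.choose])
    (separatesSubsets_self 1 _) (separatesSubsets_self 3 _)

lemma NoCommonComponent.cubics_separatesSubsets_six (hFG : NoCommonComponent F G)
    (hF : F.IsHomogeneous 3) (hG : G.IsHomogeneous 3) :
    SeparatesSubsets 3 6 (commonZeros F G) := by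
  intro p hpZ T hTZ hTfin hTcard hpT
  obtain ⟨a, S, haS, rfl, hScard⟩ := (Set.ncard_eq_succ hTfin).1 hTcard
  obtain ⟨b, hb, -, -, -, hline, -⟩ :=
    hFG.exists_two_isSeparated_pair hF hG (by omega) haS hpT hpZ hTZ
  have hconic : IsSeparated 2 p (S \ {b}) := by
    refine hFG.conics_separatesSubsets_four hF hG p hpZ _ (by grind)
      (hTfin.subset (by grind)) ?_ (by grind)
    rw [Set.ncard_sdiff_singleton_of_mem hb, hScard]
  exact (hconic.mul hline).mono (by grind)

lemma NoCommonComponent.cubics_separatesSubsets_seven (hFG : NoCommonComponent F G)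
    (hF : F.IsHomogeneous 3) (hG : G.IsHomogeneous 3) :
    SeparatesSubsets 3 7 (commonZeros F G) :=
  hFG.separatesSubsets_succ hF hG (k := 2) (e := 1) (m := 4) rfl two_ne_zero four_ne_zero
    (by simp [finrank_homogeneousSubmodule_fin_three, Nat.choose])
    (by simp [finrank_homogeneousSubmodule_fin_three, Nat.choose])
    (hFG.conics_separatesSubsets_four hF hG) (hFG.cubics_separatesSubsets_six hF hG)

theorem NoCommonComponent.eval_rep_eq_zero_of_eight_zeros (hFG : NoCommonComponent F G)
    (hF : F.IsHomogeneous 3) (hG : G.IsHomogeneous 3) (hS : S ⊆ commonZeros F G)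
    (hScard : S.ncard = 8) (hp : p ∈ commonZeros F G) {h : MvPolynomial (Fin 3) K}
    (hh : h.IsHomogeneous 3) (hhS : ∀ q ∈ S, eval q.rep h = 0) : eval p.rep h = 0 := by
  by_contra hhp
  have hSfin : S.Finite := Set.finite_of_ncard_ne_zero (by omega)
  have hpS : p ∉ S := fun hp ↦ hhp (hhS p hp)
  have hsub : insert p S ⊆ commonZeros F G := Set.insert_subset hp hS
  have hindep : ImposesIndependentConditions 3 (insert p S) :=
    ((hFG.cubics_separatesSubsets_seven hF hG).imposesIndependentConditions hS hSfin hScard).insert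
      ⟨h, hh, hhp, hhS⟩
  have hF0 : F = 0 := hFG.eq_zero_of_forall_eval_eq_zero (k := 3) (e := 0) hF hG three_ne_zero
    (hSfin.insert p) hsub hindep
    (by rw [Set.ncard_insert_of_notMem hpS hSfin, hScard]
        simp [finrank_homogeneousSubmodule_fin_three, Nat.choose]) hF fun q hq ↦ (hsub hq).1
  exact three_ne_zero (hFG hG (hF0 ▸ dvd_zero G) dvd_rfl)

end PlaneCubics

section FiniteIntersection

variable {K σ : Type*} [Field K] [IsAlgClosed K] {n : ℕ} {A : MvPolynomial σ K}

lemma exists_eval_smul_add_eq_zero_or_forall_eq (A : MvPolynomial σ K) (a b : σ → K) :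
    (∃ t : K, eval (t • a + b) A = 0) ∨ ∀ t : K, eval (t • a + b) A = eval b A := by
  let f : Polynomial K := aeval (fun i ↦ Polynomial.X * Polynomial.C (a i) + Polynomial.C (b i)) A
  have hf (t : K) : f.eval t = eval (t • a + b) A := by
    rw [← Polynomial.coe_aeval_eq_eval, comp_aeval_apply, aeval_eq_eval]
    congr! 2
    ext i
    simp [mul_comm t]
  by_cases hdeg : f.degree = 0
  · right
    intro t
    have hb := hf 0
    rw [zero_smul, zero_add] at hb
    rw [← hf, ← hb, Polynomial.eq_C_of_degree_eq_zero hdeg, Polynomial.eval_C, Polynomial.eval_C]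
  · left
    obtain ⟨t, ht⟩ := IsAlgClosed.exists_root f hdeg
    exact ⟨t, (hf t).symm.trans ht⟩

-- If `A` had no zero on the line through `a` and `b`, then `A (t • a + b)` and `A (a + t • b)`
-- would be constant in `t`, which is incompatible with homogeneity.
lemma exists_eval_smul_add_smul_eq_zero (hA : A.IsHomogeneous n) (hn : n ≠ 0) (a b : σ → K) :
    ∃ s t : K, (s ≠ 0 ∨ t ≠ 0) ∧ eval (s • a + t • b) A = 0 := by
  by_contra! hzero
  have hconst_a (t : K) : eval (t • a + b) A = eval b A :=
    (exists_eval_smul_add_eq_zero_or_forall_eq A a b).resolve_left (fun ⟨t, ht⟩ ↦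
      hzero t 1 (.inr one_ne_zero) (by rwa [one_smul])) t
  have hconst_b (t : K) : eval (t • b + a) A = eval a A :=
    (exists_eval_smul_add_eq_zero_or_forall_eq A b a).resolve_left (fun ⟨t, ht⟩ ↦
      hzero 1 t (.inl one_ne_zero) (by rwa [one_smul, add_comm])) t
  obtain ⟨r, hr⟩ := (Set.toFinite ({0, 1} : Set K)).infinite_compl.nonempty
  simp only [Set.mem_compl_iff, Set.mem_insert_iff, Set.mem_singleton_iff, not_or] at hr
  obtain ⟨s, hs⟩ := IsAlgClosed.exists_pow_nat_eq r (Nat.pos_of_ne_zero hn)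
  have hs0 : s ≠ 0 := by
    rintro rfl
    exact hr.1 (by rw [← hs, zero_pow hn])
  have hab : eval a A = eval b A := by
    rw [← hconst_a 1, ← hconst_b 1, one_smul, one_smul, add_comm]
  have hscale : r * eval a A = eval a A :=
    calc
      r * eval a A = eval (s • (s⁻¹ • b + a)) A := by
        rw [eval_smul_of_isHomogeneous hA, hconst_b, hs]
      _ = eval a A := by
        rw [smul_add, smul_inv_smul₀ hs0, add_comm, hconst_a, hab]
  have ha0 : eval a A ≠ 0 := by
    simpa using hzero 1 0 (.inl one_ne_zero)
  exact hr.2 ((mul_eq_right₀ ha0).1 hscale)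

lemma exists_mem_ne_zero_eval_eq_zero (hA : A.IsHomogeneous n) (hn : n ≠ 0)
    {W : Submodule K (σ → K)} (hW : 1 < finrank K W) : ∃ x ∈ W, x ≠ 0 ∧ eval x A = 0 := by
  have : Module.Finite K W := Module.finite_of_finrank_pos (by omega)
  have : Nontrivial W := Module.nontrivial_of_finrank_pos (R := K) (by omega)
  obtain ⟨a, ha⟩ := exists_ne (0 : W)
  obtain ⟨b, hab⟩ := exists_linearIndependent_pair_of_one_lt_finrank hW ha
  obtain ⟨s, t, hst, hzero⟩ := exists_eval_smul_add_smul_eq_zero hA hn a.1 b.1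
  refine ⟨s • a.1 + t • b.1, (s • a + t • b).2, fun h0 ↦ ?_, hzero⟩
  have := LinearIndependent.pair_iff.1 hab s t (Subtype.ext h0)
  grind

variable [Finite σ]

-- Finitely many points miss some hyperplane, on which the form still has a zero.
lemma infinite_setOf_eval_rep_eq_zero (hσ : 2 < Nat.card σ) (hA : A.IsHomogeneous n)
    (hn : n ≠ 0) : {p : ℙ K (σ → K) | eval p.rep A = 0}.Infinite := by
  intro hfin
  have := hfin.to_subtype
  obtain ⟨f, hf⟩ := Module.exists_dual_forall_apply_ne_zero (K := K)
    (fun p : {p : ℙ K (σ → K) | eval p.rep A = 0} ↦ p.1.rep) fun p ↦ p.1.rep_nonzero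
  have hker : 1 < finrank K (LinearMap.ker f) := by
    have := Fintype.ofFinite σ
    have hrank := LinearMap.finrank_range_add_finrank_ker f
    have hrange := (LinearMap.range f).finrank_le
    rw [finrank_self] at hrange
    rw [finrank_fintype_fun_eq_card, Fintype.card_eq_nat_card] at hrank
    omega
  obtain ⟨x, hx, hx0, hAx⟩ := exists_mem_ne_zero_eval_eq_zero hA hn hker
  obtain ⟨u, hu⟩ := Projectivization.exists_smul_eq_mk_rep K x hx0
  refine hf ⟨.mk K x hx0, (eval_rep_mk_eq_zero_iff hA hx0).2 hAx⟩ ?_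
  rw [← hu, Units.smul_def, map_smul, LinearMap.mem_ker.1 hx, smul_zero]

lemma noCommonComponent_of_finite_commonZeros (hσ : 2 < Nat.card σ) {F G : MvPolynomial σ K}
    (hfin : (commonZeros F G).Finite) : NoCommonComponent F G := by
  intro n A hA hAF hAG
  by_contra hn
  refine infinite_setOf_eval_rep_eq_zero hσ hA hn (hfin.subset fun p hp ↦ ?_)
  have hp0 : eval p.rep A = 0 := hp
  exact ⟨zero_dvd_iff.1 (hp0 ▸ map_dvd (eval p.rep) hAF),
    zero_dvd_iff.1 (hp0 ▸ map_dvd (eval p.rep) hAG)⟩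

theorem eval_rep_eq_zero_of_nine_le_ncard {F G h : MvPolynomial (Fin 3) K} (hF : F.IsHomogeneous 3)
    (hG : G.IsHomogeneous 3) (hh : h.IsHomogeneous 3) (hfin : (commonZeros F G).Finite)
    {P : Set (ℙ K (Fin 3 → K))} (hP : P ⊆ commonZeros F G) (hPcard : 9 ≤ P.ncard)
    {p : ℙ K (Fin 3 → K)} (hp : p ∈ P) (hhP : ∀ q ∈ P, q ≠ p → eval q.rep h = 0) :
    eval p.rep h = 0 := by
  obtain ⟨S, hS, hScard⟩ : ∃ S ⊆ P \ {p}, S.ncard = 8 := by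
    apply Set.exists_subset_card_eq
    rw [Set.ncard_sdiff_singleton_of_mem hp]
    omega
  exact (noCommonComponent_of_finite_commonZeros (by simp) hfin).eval_rep_eq_zero_of_eight_zeros
    hF hG (fun q hq ↦ hP (hS hq).1) hScard (hP hp) hh fun q hq ↦ hhP q (hS hq).1 (hS hq).2

end FiniteIntersection

end CayleyBacharach

open CayleyBacharach in
theorem stmt_2_general {K σ : Type*} [Field K] [IsAlgClosed K] (W : Submodule K (σ → K))
    (hW : Module.finrank K W = 3) (P : Set (Projectivization K (σ → K))) (hPcard : 9 ≤ P.ncard)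
    (hPW : ∀ p ∈ P, p.rep ∈ W) (F G : MvPolynomial σ K) (hF : F.IsHomogeneous 3)
    (hG : G.IsHomogeneous 3) (hPF : ∀ p ∈ P, eval p.rep F = 0) (hPG : ∀ p ∈ P, eval p.rep G = 0)
    (hdistinct : {p : Projectivization K (σ → K) |
      p.rep ∈ W ∧ eval p.rep F = 0 ∧ eval p.rep G = 0}.Finite) :
    ∀ p ∈ P, ∀ h : MvPolynomial σ K, h.IsHomogeneous 3 →
      (∀ q ∈ P, q ≠ p → eval q.rep h = 0) → eval p.rep h = 0 := by
  intro p hp h hh hhP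
  have : Module.Finite K W := Module.finite_of_finrank_pos (by omega)
  obtain ⟨φ, hφ, rfl⟩ := exists_injective_range_eq W hW
  let embed := Projectivization.map φ hφ
  have hembed : Function.Injective embed := Projectivization.map_injective φ hφ
  have hfin : (commonZeros (pullback φ F) (pullback φ G)).Finite :=
    (hdistinct.preimage hembed.injOn).subset fun q hq ↦
      ⟨(mem_range_map_iff_rep_mem hφ).1 ⟨q, rfl⟩, (map_mem_commonZeros_iff hφ hF hG).2 hq⟩
  have hPrange : P ⊆ Set.range embed := fun q hq ↦
    (mem_range_map_iff_rep_mem hφ).2 (hPW q hq)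
  have hzeros : embed ⁻¹' P ⊆ commonZeros (pullback φ F) (pullback φ G) := fun q hq ↦
    (map_mem_commonZeros_iff hφ hF hG).1 ⟨hPF _ hq, hPG _ hq⟩
  obtain ⟨p, rfl⟩ := hPrange hp
  refine (eval_map_rep_eq_zero_iff hφ hh p).2 <| eval_rep_eq_zero_of_nine_le_ncard
    (isHomogeneous_pullback φ hF) (isHomogeneous_pullback φ hG) (isHomogeneous_pullback φ hh)
    hfin hzeros ?_ hp fun q hq hqp ↦ ?_
  · rwa [Set.ncard_preimage_of_injective_subset_range hembed hPrange]
  · exact (eval_map_rep_eq_zero_iff hφ hh q).1 (hhP _ hq (hembed.ne hqp))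

/-- Let `P` be a set of at least 9 points in a plane `H ⊂ ℙ³` (the
projectivization of a 3-dimensional linear subspace `W`) which lies in the intersection of two
cubic surfaces in `ℙ³` meeting `H` in two distinct cubic curves (neither cubic vanishes
identically on `H`, and the two curves cut on `H` have no common component, i.e. their
intersection is finite). Then `P` satisfies the Cayley–Bacharach property `CB(3)` in `ℙ³`:
every cubic form on `ℙ³` vanishing on all but one point of `P` vanishes on all of `P`. -/
theorem stmt_2 (W : Submodule ℂ (Fin 4 → ℂ)) (hW : Module.finrank ℂ W = 3)
    (P : Set (Projectivization ℂ (Fin 4 → ℂ))) (hPfin : P.Finite) (hPcard : 9 ≤ P.ncard)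
    (hPW : ∀ p ∈ P, p.rep ∈ W)
    (F G : MvPolynomial (Fin 4) ℂ) (hF : F.IsHomogeneous 3) (hG : G.IsHomogeneous 3)
    (hPF : ∀ p ∈ P, eval p.rep F = 0) (hPG : ∀ p ∈ P, eval p.rep G = 0)
    (hFW : ¬ ∀ p : Projectivization ℂ (Fin 4 → ℂ), p.rep ∈ W → eval p.rep F = 0)
    (hGW : ¬ ∀ p : Projectivization ℂ (Fin 4 → ℂ), p.rep ∈ W → eval p.rep G = 0)
    (hdistinct : {p : Projectivization ℂ (Fin 4 → ℂ) |
      p.rep ∈ W ∧ eval p.rep F = 0 ∧ eval p.rep G = 0}.Finite) :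
    ∀ p ∈ P, ∀ h : MvPolynomial (Fin 4) ℂ, h.IsHomogeneous 3 →
      (∀ q ∈ P, q ≠ p → eval q.rep h = 0) → eval p.rep h = 0 :=
  stmt_2_general W hW P hPcard hPW F G hF hG hPF hPG hdistinct
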